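/- Let G₁ = Σᵢ G_{α_{1i}, β_{1i}} and G₂ = Σᵢ G_{α_{2i}, β_{2i}} be convolutions of independent gamma random variables. If (α⃗₁, β⃗₁) ≥ᵃ (α⃗₂, β⃗₂) in the arrangement order, then G₁ ≤_conv G₂. In particular, for n = 2, if α₁ < α₂ and β₁ > β₂, then G_{α₂,β₁} + G_{α₁,β₂} ≤_conv G_{α₁,β₁} + G_{α₂,β₂}. -/

import Mathlib

/-!
Put `d = b - a > 0` and let `s ≤ r`. Expanding `exp ((r - s) x)` in the density of `G_{d,s}`
exhibits this law as the negative binomial mixture, with success probability `s / r`, of the laws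
`G_{d+k,r}`. As `G_{d+k,r}` is `G_{d,r}` plus `k` independent exponential variables of rate `r`,
`G_{d,s}` is `G_{d,r}` plus an independent negative binomial sum of exponentials, so
`G_{d,r} ≤_conv G_{d,s}`. Adding `G_{a,r} + G_{a,s}` to both sides gives
`G_{b,r} + G_{a,s} ≤_conv G_{a,r} + G_{b,s}`, and the remaining summands are left alone.
-/

open MeasureTheory ProbabilityTheory Real

/-- The negative binomial probability mass function with shape `α` and success probability `p`. -/
noncomputable def negBinomPMF (α p : ℝ) (k : ℕ) : ℝ :=
  Real.Gamma (k + α) / (Nat.factorial k * Real.Gamma α) * p ^ α * (1 - p) ^ k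

/-- The negative binomial distribution as a measure on `ℝ` supported on `ℕ`. -/
noncomputable def negBinomMeasure (α p : ℝ) : Measure ℝ :=
  Measure.sum fun k : ℕ => ENNReal.ofReal (negBinomPMF α p k) • Measure.dirac (k : ℝ)

/-- Convolution order: `ν` equals `μ` convolved with some nonnegative probability measure. -/
def ConvLE (μ ν : Measure ℝ) : Prop :=
  ∃ ρ : Measure ℝ, IsProbabilityMeasure ρ ∧ ρ (Set.Iio 0) = 0 ∧ ν = μ.conv ρ

/-- Usual stochastic order on measures. -/
def StochLE (μ ν : Measure ℝ) : Prop := ∀ t : ℝ, μ (Set.Ici t) ≤ ν (Set.Ici t)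

/-- The law of the sum of independent coordinates. -/
noncomputable def convSum {n : ℕ} (μ : Fin n → Measure ℝ) : Measure ℝ :=
  (Measure.pi μ).map fun x => ∑ i, x i

open scoped ENNReal

section Convolution

lemma conv_sum_right {M ι : Type*} [AddMonoid M] [MeasurableSpace M] [MeasurableAdd₂ M]
    [Countable ι] (μ : Measure M) (ν : ι → Measure M) [∀ i, SFinite (ν i)] :
    μ ∗ Measure.sum ν = Measure.sum fun i => μ ∗ ν i := by
  unfold Measure.conv
  rw [Measure.prod_sum_right, Measure.map_sum (by fun_prop)]

lemma conv_apply_univ {M : Type*} [AddMonoid M] [MeasurableSpace M] [MeasurableAdd₂ M]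
    (μ ν : Measure M) [SFinite ν] : (μ ∗ ν) Set.univ = μ Set.univ * ν Set.univ := by
  rw [Measure.conv, Measure.map_apply (by fun_prop) MeasurableSet.univ, Set.preimage_univ,
    ← Set.univ_prod_univ, Measure.prod_prod]

lemma isProbabilityMeasure_of_conv {M : Type*} [AddMonoid M] [MeasurableSpace M]
    [MeasurableAdd₂ M] (μ ν : Measure M) [IsProbabilityMeasure μ] [SFinite ν]
    [IsProbabilityMeasure (μ ∗ ν)] : IsProbabilityMeasure ν where
  measure_univ := by
    simpa only [measure_univ, one_mul] using (conv_apply_univ μ ν).symm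

end Convolution

section ConvSum

variable {n : ℕ} (μ : Fin n → Measure ℝ)

instance isProbabilityMeasure_convSum [∀ i, IsProbabilityMeasure (μ i)] :
    IsProbabilityMeasure (convSum μ) :=
  Measure.isProbabilityMeasure_map (by fun_prop)

instance sFinite_convSum [∀ i, SigmaFinite (μ i)] : SFinite (convSum μ) := by
  unfold convSum
  infer_instance

lemma charFun_convSum [∀ i, IsProbabilityMeasure (μ i)] (t : ℝ) :
    charFun (convSum μ) t = ∏ i, charFun (μ i) t := by
  rw [convSum, charFun_map_sum_pi_eq_prod, Finset.prod_apply]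

lemma convSum_Iio_zero [∀ i, SigmaFinite (μ i)] (h : ∀ i, μ i (Set.Iio 0) = 0) :
    convSum μ (Set.Iio 0) = 0 := by
  have nonneg_eval (i : Fin n) : ∀ᵐ x ∂Measure.pi μ, 0 ≤ x i := by
    refine Measure.tendsto_eval_ae_ae.eventually (p := (0 ≤ ·)) ?_
    simpa only [ae_iff, not_le] using! h i
  have nonneg_sum : ∀ᵐ x ∂Measure.pi μ, 0 ≤ ∑ i, x i := by
    filter_upwards [Filter.eventually_all.2 nonneg_eval] with x hx
    exact Finset.sum_nonneg fun i _ => hx i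
  rw [convSum, Measure.map_apply (by fun_prop) measurableSet_Iio]
  simpa only [ae_iff, not_le] using! nonneg_sum

end ConvSum

section CompoundMeasure

/-- The compound law of a random sum `X₁ + ⋯ + X_N` in which `N` has weights `w` on `ℕ` and the
`Xᵢ` are independent of `N` and of each other, with common law `μ`. Allowing arbitrary weights
defers the question of their total mass. -/
noncomputable def compoundMeasure (w : ℕ → ℝ≥0∞) (μ : Measure ℝ) : Measure ℝ :=
  Measure.sum fun k => w k • convSum fun _ : Fin k => μ

variable (w : ℕ → ℝ≥0∞) (μ : Measure ℝ) [SigmaFinite μ]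

instance sFinite_compoundMeasure : SFinite (compoundMeasure w μ) := by
  unfold compoundMeasure
  infer_instance

lemma conv_compoundMeasure (κ : Measure ℝ) :
    κ ∗ compoundMeasure w μ = Measure.sum fun k => w k • (κ ∗ convSum fun _ : Fin k => μ) := by
  simp_rw [compoundMeasure, conv_sum_right, Measure.conv_smul_right]

lemma compoundMeasure_Iio_zero (h : μ (Set.Iio 0) = 0) : compoundMeasure w μ (Set.Iio 0) = 0 := by
  simp [compoundMeasure, Measure.sum_apply _ measurableSet_Iio,
    convSum_Iio_zero (fun _ => μ) fun _ => h]

end CompoundMeasure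

section GammaConvolution

variable {a b r : ℝ}

@[fun_prop]
lemma measurable_gammaPDF (a r : ℝ) : Measurable (gammaPDF a r) :=
  (measurable_gammaPDFReal a r).ennreal_ofReal

@[fun_prop]
lemma measurable_betaPDF (a b : ℝ) : Measurable (betaPDF a b) :=
  (measurable_betaPDFReal a b).ennreal_ofReal

lemma gammaMeasure_Iio_zero (a r : ℝ) : gammaMeasure a r (Set.Iio 0) = 0 := by
  rw [gammaMeasure, withDensity_apply _ measurableSet_Iio]
  exact lintegral_gammaPDF_of_nonpos le_rfl

lemma lintegral_eq_mul_lintegral_comp_mul_left {f : ℝ → ℝ≥0∞} (hf : Measurable f) {x : ℝ}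
    (hx : x ≠ 0) : ∫⁻ y, f y = ENNReal.ofReal |x| * ∫⁻ u, f (x * u) := by
  conv_lhs => rw [← Real.smul_map_volume_mul_left hx]
  rw [lintegral_smul_measure, lintegral_map hf (by fun_prop), smul_eq_mul]

/- If `X` and `Y` are independent with laws `G_{a,r}` and `G_{b,r}`, this is the factorization of
the joint density of `X + Y` and `X / (X + Y)`. -/
lemma gammaPDFReal_mul_gammaPDFReal (ha : 0 < a) (hb : 0 < b) (hr : 0 < r) {x u : ℝ} (hx : 0 < x)
    (hu₀ : 0 < u) (hu₁ : u < 1) :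
    gammaPDFReal a r (x * u) * gammaPDFReal b r (x * (1 - u)) =
      x⁻¹ * gammaPDFReal (a + b) r x * betaPDFReal a b u := by
  have h1u : 0 < 1 - u := sub_pos.2 hu₁
  have x_rpow : x ^ (a + b - 1) = x ^ (a - 1) * x ^ (b - 1) * x := by
    rw [← Real.rpow_add hx, ← Real.rpow_add_one hx.ne']
    ring_nf
  have exp_split : exp (-(r * x)) = exp (-(r * (x * u))) * exp (-(r * (x * (1 - u)))) := by
    rw [← Real.exp_add]
    ring_nf
  have Γa_ne_zero := (Real.Gamma_pos_of_pos ha).ne'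
  have Γb_ne_zero := (Real.Gamma_pos_of_pos hb).ne'
  have Γab_ne_zero := (Real.Gamma_pos_of_pos (add_pos ha hb)).ne'
  rw [gammaPDFReal, gammaPDFReal, gammaPDFReal, betaPDFReal, if_pos (by positivity),
    if_pos (by positivity), if_pos hx.le, if_pos ⟨hu₀, hu₁⟩, Real.mul_rpow hx.le hu₀.le,
    Real.mul_rpow hx.le h1u.le, Real.rpow_add hr, beta, x_rpow, exp_split]
  field_simp

lemma ae_gammaPDF_mul_gammaPDF (ha : 0 < a) (hb : 0 < b) (hr : 0 < r) {x : ℝ} (hx : 0 < x) :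
    ∀ᵐ u, gammaPDF a r (x * u) * gammaPDF b r (-(x * u) + x) =
      ENNReal.ofReal x⁻¹ * gammaPDF (a + b) r x * betaPDF a b u := by
  filter_upwards [volume.ae_ne 0, volume.ae_ne 1] with u hu₀ hu₁
  rcases hu₀.lt_or_gt with hneg | hpos
  · rw [gammaPDF_of_neg (mul_neg_of_pos_of_neg hx hneg), betaPDF_eq_zero_of_nonpos hneg.le,
      zero_mul, mul_zero]
  rcases hu₁.lt_or_gt with hlt | hgt
  · have hxu : -(x * u) + x = x * (1 - u) := by ring
    rw [hxu, gammaPDF, gammaPDF, gammaPDF, betaPDF,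
      ← ENNReal.ofReal_mul (gammaPDFReal_nonneg ha hr _), ← ENNReal.ofReal_mul (by positivity),
      ← ENNReal.ofReal_mul
        (mul_nonneg (by positivity) (gammaPDFReal_nonneg (add_pos ha hb) hr x)),
      gammaPDFReal_mul_gammaPDFReal ha hb hr hx hpos hlt]
  · have hxu : -(x * u) + x < 0 := by linarith [(lt_mul_iff_one_lt_right hx).2 hgt]
    rw [gammaPDF_of_neg hxu, betaPDF_eq_zero_of_one_le hgt.le, mul_zero, mul_zero]

lemma lconvolution_gammaPDF_of_neg {s x : ℝ} (hx : x < 0) :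
    (gammaPDF a r ⋆ₗ gammaPDF b s) x = 0 := by
  rw [lconvolution_def]
  refine lintegral_eq_zero_of_ae_eq_zero (ae_of_all _ fun y => ?_)
  rcases lt_or_ge y 0 with hy | hy
  · simp [gammaPDF_of_neg hy]
  · simp [gammaPDF_of_neg (show -y + x < 0 by linarith)]

lemma lconvolution_gammaPDF_of_pos (ha : 0 < a) (hb : 0 < b) (hr : 0 < r) {x : ℝ} (hx : 0 < x) :
    (gammaPDF a r ⋆ₗ gammaPDF b r) x = gammaPDF (a + b) r x := by
  calc ∫⁻ y, gammaPDF a r y * gammaPDF b r (-y + x)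
      = ENNReal.ofReal x * ∫⁻ u, gammaPDF a r (x * u) * gammaPDF b r (-(x * u) + x) := by
        rw [lintegral_eq_mul_lintegral_comp_mul_left (by fun_prop) hx.ne', abs_of_pos hx]
    _ = ENNReal.ofReal x *
          ∫⁻ u, ENNReal.ofReal x⁻¹ * gammaPDF (a + b) r x * betaPDF a b u := by
        rw [lintegral_congr_ae (ae_gammaPDF_mul_gammaPDF ha hb hr hx)]
    _ = gammaPDF (a + b) r x := by
        rw [lintegral_const_mul _ (by fun_prop), lintegral_betaPDF_eq_one ha hb, mul_one,
          ← mul_assoc, ← ENNReal.ofReal_mul hx.le, mul_inv_cancel₀ hx.ne', ENNReal.ofReal_one,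
          one_mul]

theorem gammaMeasure_conv_gammaMeasure (ha : 0 < a) (hb : 0 < b) (hr : 0 < r) :
    gammaMeasure a r ∗ gammaMeasure b r = gammaMeasure (a + b) r := by
  unfold gammaMeasure
  rw [conv_withDensity_eq_lconvolution (by fun_prop) (by fun_prop)]
  refine withDensity_congr_ae ?_
  filter_upwards [volume.ae_ne 0] with x hx
  rcases hx.lt_or_gt with hneg | hpos
  · rw [lconvolution_gammaPDF_of_neg hneg, gammaPDF_of_neg hneg]
  · exact lconvolution_gammaPDF_of_pos ha hb hr hpos

lemma gammaMeasure_conv_convSum_expMeasure (ha : 0 < a) (hr : 0 < r) (k : ℕ) :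
    gammaMeasure a r ∗ convSum (fun _ : Fin k => expMeasure r) = gammaMeasure (a + k) r := by
  have := isProbabilityMeasure_expMeasure hr
  have (m : ℕ) : IsProbabilityMeasure (gammaMeasure (a + m) r) :=
    isProbabilityMeasure_gammaMeasure (by positivity) hr
  have := isProbabilityMeasure_gammaMeasure ha hr
  refine Measure.ext_of_charFun (funext fun t => ?_)
  rw [charFun_conv, charFun_convSum, Fin.prod_const]
  induction k with
  | zero => simp
  | succ k ih =>
    rw [pow_succ, ← mul_assoc, ih, ← charFun_conv, expMeasure,
      gammaMeasure_conv_gammaMeasure (by positivity) one_pos hr, Nat.cast_succ, add_assoc]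

end GammaConvolution

section NegativeBinomialMixture

variable {d r s : ℝ}

lemma negBinomPMF_nonneg {p : ℝ} (hd : 0 < d) (hp₀ : 0 ≤ p) (hp₁ : p ≤ 1) (k : ℕ) :
    0 ≤ negBinomPMF d p k := by
  have := sub_nonneg.2 hp₁
  unfold negBinomPMF
  positivity

lemma negBinomPMF_mul_gammaPDFReal (hd : 0 < d) (hs : 0 < s) (hr : 0 < r) {x : ℝ} (hx : 0 < x)
    (k : ℕ) :
    negBinomPMF d (s / r) k * gammaPDFReal (d + k) r x =
      s ^ d / Real.Gamma d * x ^ (d - 1) * exp (-(r * x)) * (((r - s) * x) ^ k / k.factorial) := by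
  have Γd_ne_zero := (Real.Gamma_pos_of_pos hd).ne'
  have Γdk_ne_zero := (Real.Gamma_pos_of_pos (show 0 < d + k by positivity)).ne'
  have x_rpow : x ^ (d + k - 1) = x ^ (d - 1) * x ^ k := by
    rw [← Real.rpow_natCast, ← Real.rpow_add hx]
    ring_nf
  have failure_pow : (1 - s / r) ^ k = (r - s) ^ k / r ^ k := by
    rw [one_sub_div hr.ne', div_pow]
  rw [negBinomPMF, gammaPDFReal, if_pos hx.le, x_rpow, failure_pow, Real.rpow_add hr,
    Real.rpow_natCast, Real.div_rpow hs.le hr.le, mul_pow, add_comm (k : ℝ) d]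
  field_simp

lemma hasSum_negBinomPMF_mul_gammaPDFReal (hd : 0 < d) (hs : 0 < s) (hr : 0 < r) {x : ℝ}
    (hx : 0 < x) :
    HasSum (fun k => negBinomPMF d (s / r) k * gammaPDFReal (d + k) r x) (gammaPDFReal d s x) := by
  have density : gammaPDFReal d s x =
      s ^ d / Real.Gamma d * x ^ (d - 1) * exp (-(r * x)) * exp ((r - s) * x) := by
    rw [gammaPDFReal, if_pos hx.le, mul_assoc _ (exp _), ← Real.exp_add]
    ring_nf
  simp_rw [negBinomPMF_mul_gammaPDFReal hd hs hr hx, density, Real.exp_eq_exp_ℝ]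
  exact (NormedSpace.expSeries_div_hasSum_exp ((r - s) * x)).mul_left _

lemma gammaPDF_eq_tsum_negBinomPMF (hd : 0 < d) (hs : 0 < s) (hsr : s ≤ r) {x : ℝ} (hx : x ≠ 0) :
    gammaPDF d s x =
      ∑' k, ENNReal.ofReal (negBinomPMF d (s / r) k) * gammaPDF (d + k) r x := by
  have hr : 0 < r := hs.trans_le hsr
  rcases hx.lt_or_gt with hneg | hpos
  · simp [gammaPDF_of_neg hneg]
  have pmf_nonneg := negBinomPMF_nonneg hd (by positivity) ((div_le_one hr).2 hsr)
  have mixture := hasSum_negBinomPMF_mul_gammaPDFReal hd hs hr hpos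
  simp_rw [gammaPDF, ← ENNReal.ofReal_mul (pmf_nonneg _)]
  rw [← mixture.tsum_eq, ENNReal.ofReal_tsum_of_nonneg _ mixture.summable]
  exact fun k => mul_nonneg (pmf_nonneg k) (gammaPDFReal_nonneg (by positivity) hr x)

theorem gammaMeasure_eq_sum_negBinomPMF (hd : 0 < d) (hs : 0 < s) (hsr : s ≤ r) :
    gammaMeasure d s = Measure.sum fun k : ℕ =>
      ENNReal.ofReal (negBinomPMF d (s / r) k) • gammaMeasure (d + k) r := by
  unfold gammaMeasure
  simp_rw [← withDensity_smul _ (measurable_gammaPDF _ _)]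
  rw [← withDensity_tsum fun k => (measurable_gammaPDF _ _).const_smul _]
  refine withDensity_congr_ae ?_
  filter_upwards [volume.ae_ne 0] with x hx
  rw [ENNReal.tsum_apply, gammaPDF_eq_tsum_negBinomPMF hd hs hsr hx]
  rfl

theorem gammaMeasure_eq_conv_compoundMeasure (hd : 0 < d) (hs : 0 < s) (hsr : s ≤ r) :
    gammaMeasure d s = gammaMeasure d r ∗
      compoundMeasure (fun k => ENNReal.ofReal (negBinomPMF d (s / r) k)) (expMeasure r) := by
  have hr : 0 < r := hs.trans_le hsr
  have := isProbabilityMeasure_expMeasure hr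
  simp_rw [conv_compoundMeasure, gammaMeasure_conv_convSum_expMeasure hd hr]
  exact gammaMeasure_eq_sum_negBinomPMF hd hs hsr

end NegativeBinomialMixture

section ConvLE

lemma ConvLE.conv_left {μ ν : Measure ℝ} (h : ConvLE μ ν) (κ : Measure ℝ) [SFinite μ] :
    ConvLE (κ ∗ μ) (κ ∗ ν) := by
  obtain ⟨ρ, hρ, hρ₀, rfl⟩ := h
  exact ⟨ρ, hρ, hρ₀, (Measure.conv_assoc κ μ ρ).symm⟩

lemma convLE_convSum_of_pair {n : ℕ} {μ ν : Fin n → Measure ℝ} [∀ k, IsProbabilityMeasure (μ k)]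
    [∀ k, IsProbabilityMeasure (ν k)] {i j : Fin n} (hij : i ≠ j)
    (hpair : ConvLE (μ i ∗ μ j) (ν i ∗ ν j)) (hrest : ∀ k, k ≠ i → k ≠ j → μ k = ν k) :
    ConvLE (convSum μ) (convSum ν) := by
  obtain ⟨ρ, hρ, hρ₀, hconv⟩ := hpair
  refine ⟨ρ, hρ, hρ₀, Measure.ext_of_charFun (funext fun t => ?_)⟩
  have pair : charFun (ν i) t * charFun (ν j) t =
      charFun (μ i) t * charFun (μ j) t * charFun ρ t := by
    rw [← charFun_conv, hconv, charFun_conv, charFun_conv]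
  have rest : ∏ k ∈ ({i, j} : Finset (Fin n))ᶜ, charFun (ν k) t =
      ∏ k ∈ ({i, j} : Finset (Fin n))ᶜ, charFun (μ k) t := by
    refine Finset.prod_congr rfl fun k hk => ?_
    simp only [Finset.mem_compl, Finset.mem_insert, Finset.mem_singleton, not_or] at hk
    rw [hrest k hk.1 hk.2]
  rw [charFun_conv, charFun_convSum, charFun_convSum, ← Finset.prod_mul_prod_compl {i, j},
    ← Finset.prod_mul_prod_compl {i, j} fun k => charFun (μ k) t, Finset.prod_pair hij,
    Finset.prod_pair hij, pair, rest]
  ring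

theorem convLE_gammaMeasure_of_rate_le {d r s : ℝ} (hd : 0 < d) (hs : 0 < s) (hsr : s ≤ r) :
    ConvLE (gammaMeasure d r) (gammaMeasure d s) := by
  have hr : 0 < r := hs.trans_le hsr
  have := isProbabilityMeasure_expMeasure hr
  have := isProbabilityMeasure_gammaMeasure hd hr
  set ρ := compoundMeasure (fun k => ENNReal.ofReal (negBinomPMF d (s / r) k)) (expMeasure r)
  have hconv : gammaMeasure d s = gammaMeasure d r ∗ ρ :=
    gammaMeasure_eq_conv_compoundMeasure hd hs hsr
  have : IsProbabilityMeasure (gammaMeasure d r ∗ ρ) :=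
    hconv ▸ isProbabilityMeasure_gammaMeasure hd hs
  exact ⟨ρ, isProbabilityMeasure_of_conv (gammaMeasure d r) ρ,
    compoundMeasure_Iio_zero _ (expMeasure r) (gammaMeasure_Iio_zero 1 r), hconv⟩

theorem convLE_gammaMeasure_conv_swap {a b r s : ℝ} (ha : 0 < a) (hab : a < b) (hs : 0 < s)
    (hsr : s ≤ r) :
    ConvLE (gammaMeasure b r ∗ gammaMeasure a s) (gammaMeasure a r ∗ gammaMeasure b s) := by
  have hr : 0 < r := hs.trans_le hsr
  have hd : 0 < b - a := sub_pos.2 hab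
  have split {q : ℝ} (hq : 0 < q) :
      gammaMeasure b q = gammaMeasure a q ∗ gammaMeasure (b - a) q := by
    rw [gammaMeasure_conv_gammaMeasure ha hd hq, add_sub_cancel]
  have := isProbabilityMeasure_gammaMeasure ha hr
  have := isProbabilityMeasure_gammaMeasure ha hs
  have := isProbabilityMeasure_gammaMeasure hd hr
  have := isProbabilityMeasure_gammaMeasure hd hs
  have swapped : gammaMeasure b r ∗ gammaMeasure a s =
      (gammaMeasure a r ∗ gammaMeasure a s) ∗ gammaMeasure (b - a) r := by
    rw [split hr, Measure.conv_assoc, Measure.conv_comm (gammaMeasure (b - a) r),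
      ← Measure.conv_assoc]
  have original : gammaMeasure a r ∗ gammaMeasure b s =
      (gammaMeasure a r ∗ gammaMeasure a s) ∗ gammaMeasure (b - a) s := by
    rw [split hs, ← Measure.conv_assoc]
  rw [swapped, original]
  exact (convLE_gammaMeasure_of_rate_le hd hs hsr).conv_left _

end ConvLE

/-- Arrangement order implies convolution order for gamma convolutions: it suffices
to treat a generating transposition of the arrangement order, interchanging the
shapes at two coordinates `i, j` with `α i < α j` and `β j < β i`.  In particular,
for `n = 2`: `G_{α₂,β₁} + G_{α₁,β₂} ≤_conv G_{α₁,β₁} + G_{α₂,β₂}`. -/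
theorem gamma_arrangement_conv_order {n : ℕ} (α β : Fin n → ℝ)
    (hα : ∀ k, 0 < α k) (hβ : ∀ k, 0 < β k) (i j : Fin n)
    (hij : α i < α j) (hba : β j < β i) :
    ConvLE (convSum fun k => gammaMeasure (α (Equiv.swap i j k)) (β k))
      (convSum fun k => gammaMeasure (α k) (β k)) := by
  have hne : i ≠ j := fun h => hij.ne (congrArg α h)
  have (k : Fin n) := isProbabilityMeasure_gammaMeasure (hα (Equiv.swap i j k)) (hβ k)
  have (k : Fin n) := isProbabilityMeasure_gammaMeasure (hα k) (hβ k)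
  refine convLE_convSum_of_pair hne ?_ fun k hki hkj => ?_
  · rw [Equiv.swap_apply_left, Equiv.swap_apply_right]
    exact convLE_gammaMeasure_conv_swap (hα i) hij (hβ j) hba.le
  · rw [Equiv.swap_apply_of_ne_of_ne hki hkj]
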